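/- arXiv:2210.05020 — 7 statements merged into one kernel-verified Lean document; each statement's English description precedes it below -/
import Mathlib

section
/- Let n = f + c and let L be a real symmetric positive semidefinite n×n matrix written in block form L = [[L_ff, L_fc], [L_cf, L_cc]] where L_ff is an invertible f×f block, L_cf = L_fcᵀ, and L_cc is c×c. Let S := L_cc − L_cf · L_ff⁻¹ · L_fc be the Schur complement of L_ff in L, let ε > 0, and let S̃ be a real symmetric c×c matrix with S ≈_ε S̃. Define L̃ := [[L_ff, L_fc], [L_cf, S̃ + L_cf · L_ff⁻¹ · L_fc]]. Then: (i) L ≈_ε L̃; and (ii) for every real n×p matrix B and all real n×p matrices X⋆ and X̃ satisfying L·X⋆ = B and L̃·X̃ = B, it holds that ‖X̃ − X⋆‖_L ≤ c(ε)·‖X⋆‖_L, where c(ε) := sqrt(1 + e^{2ε} − 2e^{−ε}). -/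
open Matrix

/-- `A ≈_ε B`: `e^{-ε}·B ⪯ A ⪯ e^{ε}·B` in the Loewner order. -/
def SpecApprox {ι : Type*} [Fintype ι] (ε : ℝ) (A B : Matrix ι ι ℝ) : Prop :=
  (A - Real.exp (-ε) • B).PosSemidef ∧ (Real.exp ε • B - A).PosSemidef

/-- `‖X‖_L = sqrt(trace(Xᵀ L X))`. -/
noncomputable def Lnorm {ι κ : Type*} [Fintype ι] [Fintype κ]
    (L : Matrix ι ι ℝ) (X : Matrix ι κ ℝ) : ℝ :=
  Real.sqrt (Xᵀ * L * X).trace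

/-- `c(ε) = sqrt(1 + e^{2ε} − 2e^{−ε})`. -/
noncomputable def cEps (ε : ℝ) : ℝ :=
  Real.sqrt (1 + Real.exp (2 * ε) - 2 * Real.exp (-ε))

theorem aux_tr_nonneg {n p : Type*} [Fintype n] [Fintype p] {Q : Matrix n n ℝ}
    (h : Q.PosSemidef) (Y : Matrix n p ℝ) : 0 ≤ (Yᵀ * Q * Y).trace := by
  have := (h.conjTranspose_mul_mul_same Y).trace_nonneg
  simpa [conjTranspose_eq_transpose_of_trivial] using this

theorem aux_expand {n p : Type*} [Fintype n] [Fintype p] {Q : Matrix n n ℝ}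
    (h : Q.IsSymm) (X Y : Matrix n p ℝ) (a : ℝ) :
    ((X - a • Y)ᵀ * Q * (X - a • Y)).trace =
      (Xᵀ * Q * X).trace - 2 * a * (Xᵀ * Q * Y).trace + a ^ 2 * (Yᵀ * Q * Y).trace := by
  have e : (Yᵀ * Q * X).trace = (Xᵀ * Q * Y).trace := by
    rw [← trace_transpose (Yᵀ * Q * X)]
    simp [transpose_mul, h.eq, Matrix.mul_assoc]
  simp [Matrix.sub_mul, Matrix.mul_sub, e]
  ring

theorem aux_err {n p : Type*} [Fintype n] [Fintype p] {L M : Matrix n n ℝ} {ε : ℝ}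
    (hL : L.PosSemidef) (hM : M.PosSemidef) (hLs : L.IsSymm) (hMs : M.IsSymm)
    (h : SpecApprox ε L M) (X Y : Matrix n p ℝ) (e : L * X = M * Y) :
    Lnorm L (Y - X) ≤ cEps ε * Lnorm L X := by
  obtain ⟨h1, h2⟩ := h
  have g1 := aux_tr_nonneg h1 X
  have g2 := aux_tr_nonneg h2 Y
  have g3 := aux_tr_nonneg hM (Y - Real.exp (-ε) • X)
  have g4 := aux_tr_nonneg hL (Y - Real.exp ε • X)
  have g5 := aux_expand hLs Y X 1
  have g6 := aux_tr_nonneg hL X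
  rw [aux_expand hMs] at g3
  rw [aux_expand hLs] at g4
  have e1 : (Yᵀ * L * X).trace = (Yᵀ * M * Y).trace := by
    rw [Matrix.mul_assoc, e, Matrix.mul_assoc]
  have e2 : (Yᵀ * M * X).trace = (Xᵀ * L * X).trace := by
    rw [Matrix.mul_assoc Xᵀ, e, ← trace_transpose]
    simp [transpose_mul, hMs.eq]
  rw [e2] at g3
  rw [e1] at g4 g5
  simp only [Matrix.sub_mul, Matrix.mul_sub, trace_sub, Matrix.mul_smul, Matrix.smul_mul,
    trace_smul, smul_eq_mul] at g1 g2
  simp only [one_smul] at g5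
  unfold Lnorm cEps
  rw [← Real.sqrt_mul' _ g6]
  apply Real.sqrt_le_sqrt
  rw [g5]
  have hE : Real.exp (2 * ε) = Real.exp ε ^ 2 := by rw [← Real.exp_nat_mul]; norm_num
  have hm : Real.exp (-ε) * Real.exp ε = 1 := by rw [← Real.exp_add]; simp
  have hp := Real.exp_pos ε
  have hq := Real.exp_pos (-ε)
  rw [hE]
  generalize Real.exp ε = E at *
  generalize Real.exp (-ε) = D at *
  generalize (Xᵀ * L * X).trace = s at *
  generalize (Yᵀ * M * Y).trace = t at *
  generalize (Yᵀ * L * Y).trace = r at *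
  generalize (Xᵀ * M * X).trace = w at *
  have k1 : D * s ≤ t := by nlinarith [mul_nonneg hq.le g1]
  have k2 : t ≤ E * s := by
    have : 0 ≤ E * (E * s - t) := by nlinarith
    have := nonneg_of_mul_nonneg_right this hp
    linarith
  have k3 : r ≤ E ^ 2 * s := by nlinarith
  nlinarith

/-- Sparsified-Schur-complement approximation of a block PSD matrix:
`L̃` obtained by replacing the Schur complement `S` of `L_ff` with an `ε`-approximation `S̃`
satisfies `L ≈_ε L̃`, and any solutions of `L X⋆ = B`, `L̃ X̃ = B` satisfy
`‖X̃ − X⋆‖_L ≤ c(ε) ‖X⋆‖_L`. -/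
theorem stmt0 {f c : ℕ}
    (Lff : Matrix (Fin f) (Fin f) ℝ) (Lfc : Matrix (Fin f) (Fin c) ℝ)
    (Lcf : Matrix (Fin c) (Fin f) ℝ) (Lcc : Matrix (Fin c) (Fin c) ℝ)
    (L : Matrix (Fin f ⊕ Fin c) (Fin f ⊕ Fin c) ℝ)
    (hL : L = Matrix.fromBlocks Lff Lfc Lcf Lcc)
    (hLsymm : L.IsSymm) (hLpsd : L.PosSemidef)
    (hLcf : Lcf = Lfcᵀ)
    (hLff : IsUnit Lff)
    (S : Matrix (Fin c) (Fin c) ℝ)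
    (hS : S = Lcc - Lcf * Lff⁻¹ * Lfc)
    (ε : ℝ) (hε : 0 < ε)
    (Stilde : Matrix (Fin c) (Fin c) ℝ) (hStildeSymm : Stilde.IsSymm)
    (hApprox : SpecApprox ε S Stilde)
    (Ltilde : Matrix (Fin f ⊕ Fin c) (Fin f ⊕ Fin c) ℝ)
    (hLtilde : Ltilde = Matrix.fromBlocks Lff Lfc Lcf (Stilde + Lcf * Lff⁻¹ * Lfc)) :
    SpecApprox ε L Ltilde ∧
      ∀ (p : ℕ) (B Xstar Xtilde : Matrix (Fin f ⊕ Fin c) (Fin p) ℝ),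
        L * Xstar = B → Ltilde * Xtilde = B →
        Lnorm L (Xtilde - Xstar) ≤ cEps ε * Lnorm L Xstar := by
  subst hLcf
  have hffp : Lff.PosSemidef := by
    have := hLpsd.submatrix Sum.inl
    rw [hL] at this
    exact this
  have hffs : Lffᵀ = Lff := by
    have := hffp.isHermitian.eq
    rwa [conjTranspose_eq_transpose_of_trivial] at this
  have hdet : IsUnit Lff.det := (Matrix.isUnit_iff_isUnit_det _).1 hLff
  set M := Matrix.fromBlocks Lff Lfc Lfcᵀ (Lfcᵀ * Lff⁻¹ * Lfc) with hM
  have hMp : M.PosSemidef := by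
    have := hffp.conjTranspose_mul_mul_same (Matrix.fromCols (1 : Matrix (Fin f) (Fin f) ℝ) (Lff⁻¹ * Lfc))
    convert this using 1
    rw [conjTranspose_eq_transpose_of_trivial, transpose_fromCols, fromRows_mul, fromRows_mul_fromCols, hM]
    simp [transpose_mul, transpose_nonsing_inv, hffs, Matrix.mul_assoc]
    rw [mul_nonsing_inv_cancel_left _ _ hdet, nonsing_inv_mul _ hdet]
    simp
  have hN : ∀ T : Matrix (Fin c) (Fin c) ℝ, T.PosSemidef →
      (Matrix.fromBlocks (0 : Matrix (Fin f) (Fin f) ℝ) 0 0 T).PosSemidef := by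
    intro T hT
    have := hT.conjTranspose_mul_mul_same (Matrix.fromCols (0 : Matrix (Fin c) (Fin f) ℝ) (1 : Matrix (Fin c) (Fin c) ℝ))
    convert this using 1
    rw [conjTranspose_eq_transpose_of_trivial, transpose_fromCols, fromRows_mul, fromRows_mul_fromCols]
    simp
  have hL2 : L = M + Matrix.fromBlocks 0 0 0 S := by
    rw [hL, hM, hS, fromBlocks_add]; simp
  have hLt2 : Ltilde = M + Matrix.fromBlocks 0 0 0 Stilde := by
    rw [hLtilde, hM, fromBlocks_add]; simp [add_comm]
  have hA : SpecApprox ε L Ltilde := by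
    obtain ⟨h1, h2⟩ := hApprox
    constructor
    · have k : (0:ℝ) ≤ 1 - Real.exp (-ε) := by
        have : Real.exp (-ε) ≤ 1 := Real.exp_le_one_iff.2 (by linarith)
        linarith
      have := (hMp.smul k).add (hN _ h1)
      convert this using 1
      have e : Matrix.fromBlocks (0 : Matrix (Fin f) (Fin f) ℝ) 0 0 (S - Real.exp (-ε) • Stilde)
        = Matrix.fromBlocks 0 0 0 S - Real.exp (-ε) • Matrix.fromBlocks 0 0 0 Stilde := by
        simp [fromBlocks_smul, sub_eq_add_neg, fromBlocks_neg, fromBlocks_add]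
      rw [e, hL2, hLt2]
      module
    · have k : (0:ℝ) ≤ Real.exp ε - 1 := by
        have : 1 ≤ Real.exp ε := Real.one_le_exp hε.le
        linarith
      have := (hMp.smul k).add (hN _ h2)
      convert this using 1
      have e : Matrix.fromBlocks (0 : Matrix (Fin f) (Fin f) ℝ) 0 0 (Real.exp ε • Stilde - S)
        = Real.exp ε • Matrix.fromBlocks 0 0 0 Stilde - Matrix.fromBlocks 0 0 0 S := by
        simp [fromBlocks_smul, sub_eq_add_neg, fromBlocks_neg, fromBlocks_add]
      rw [e, hL2, hLt2]
      module
  refine ⟨hA, ?_⟩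
  have hLtp : Ltilde.PosSemidef := by
    have := (hA.2.add hLpsd).smul (Real.exp_pos (-ε)).le
    convert this using 1
    rw [sub_add_cancel, smul_smul, ← Real.exp_add]
    simp
  have hLts : Ltilde.IsSymm := by
    have := hLtp.isHermitian.eq
    rwa [conjTranspose_eq_transpose_of_trivial] at this
  intro p B X Y h1 h2
  exact aux_err hLpsd hLtp hLsymm hLts hA X Y (h1.trans h2.symm)
end

section
/- Let L and L̃ be real symmetric positive semidefinite n×n matrices with L ≈_ε L̃ for some ε > 0. Let B be a real n×p matrix each of whose columns lies in the column space of L. Let X⋆ and X̃ be real n×p matrices such that L·X⋆ = B and L̃·X̃ = B. Then ‖X⋆ − X̃‖_L ≤ c(ε)·‖X⋆‖_L, where c(ε) := sqrt(1 + e^{2ε} − 2e^{−ε}). -/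
open Matrix

theorem psd_tr {n p : ℕ} {A : Matrix (Fin n) (Fin n) ℝ} (hA : A.PosSemidef)
    (X : Matrix (Fin n) (Fin p) ℝ) : 0 ≤ (Xᵀ * A * X).trace := by
  have h := (hA.conjTranspose_mul_mul_same X).trace_nonneg
  rwa [Matrix.conjTranspose_eq_transpose_of_trivial] at h

theorem psd_symm {n : ℕ} {A : Matrix (Fin n) (Fin n) ℝ} (hA : A.PosSemidef) : Aᵀ = A := by
  have h := hA.isHermitian.eq
  rwa [Matrix.conjTranspose_eq_transpose_of_trivial] at h

theorem tr_expand {n p : ℕ} (A : Matrix (Fin n) (Fin n) ℝ) (t : ℝ)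
    (X Z : Matrix (Fin n) (Fin p) ℝ) :
    ((Z - t • X)ᵀ * A * (Z - t • X)).trace = (Zᵀ * A * Z).trace - t * (Zᵀ * A * X).trace
      - t * (Xᵀ * A * Z).trace + t ^ 2 * (Xᵀ * A * X).trace := by
  simp only [Matrix.transpose_sub, Matrix.transpose_smul, Matrix.sub_mul, Matrix.mul_sub,
    Matrix.smul_mul, Matrix.mul_smul, Matrix.trace_sub, Matrix.trace_smul, smul_eq_mul]
  ring

/-- If `L ≈_ε L̃` (both symmetric PSD), each column of `B` is in the
column space of `L`, `L X⋆ = B` and `L̃ X̃ = B`, then `‖X⋆ − X̃‖_L ≤ c(ε) ‖X⋆‖_L`. -/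
theorem stmt1 {n p : ℕ} (ε : ℝ) (hε : 0 < ε)
    (L Ltilde : Matrix (Fin n) (Fin n) ℝ)
    (hL : L.PosSemidef) (hLt : Ltilde.PosSemidef)
    (hApprox : SpecApprox ε L Ltilde)
    (B Xstar Xtilde : Matrix (Fin n) (Fin p) ℝ)
    (hB : ∀ j : Fin p, ∃ y : Fin n → ℝ, L *ᵥ y = fun i => B i j)
    (hXstar : L * Xstar = B) (hXtilde : Ltilde * Xtilde = B) :
    Lnorm L (Xstar - Xtilde) ≤ cEps ε * Lnorm L Xstar := by
  obtain ⟨h1, h2⟩ := hApprox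
  have sL := psd_symm hL
  have sM := psd_symm hLt
  have e1 : Xtildeᵀ * L * Xstar = Xtildeᵀ * Ltilde * Xtilde := by
    rw [Matrix.mul_assoc, Matrix.mul_assoc, hXstar, hXtilde]
  have e2 : Xstarᵀ * Ltilde * Xtilde = Xstarᵀ * L * Xstar := by
    rw [Matrix.mul_assoc, Matrix.mul_assoc, hXstar, hXtilde]
  have tX : Xstarᵀ * L = Bᵀ := by rw [← hXstar, Matrix.transpose_mul, sL]
  have tZ : Xtildeᵀ * Ltilde = Bᵀ := by rw [← hXtilde, Matrix.transpose_mul, sM]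
  have e3 : Xstarᵀ * L * Xtilde = Xtildeᵀ * Ltilde * Xtilde := by rw [tX, tZ]
  have e4 : Xtildeᵀ * Ltilde * Xstar = Xstarᵀ * L * Xstar := by rw [tX, tZ]
  have a0 := psd_tr hL Xstar
  have p1 := psd_tr h1 Xstar
  have p2 := psd_tr h2 Xtilde
  have p3 := psd_tr hLt (Xtilde - Real.exp (-ε) • Xstar)
  have p4 := psd_tr hL (Xtilde - Real.exp ε • Xstar)
  have p5 := tr_expand L 1 Xtilde Xstar
  rw [tr_expand, e4, e2] at p3
  rw [tr_expand, e1, e3] at p4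
  rw [one_smul, e1, e3] at p5
  simp only [Matrix.sub_mul, Matrix.mul_sub, Matrix.smul_mul, Matrix.mul_smul,
    Matrix.trace_sub, Matrix.trace_smul, smul_eq_mul] at p1 p2
  unfold Lnorm cEps
  rw [← Real.sqrt_mul' _ a0, p5]
  apply Real.sqrt_le_sqrt
  have he : Real.exp (2 * ε) = Real.exp ε ^ 2 := by rw [two_mul, Real.exp_add, sq]
  have hm : Real.exp (-ε) * Real.exp ε = 1 := by rw [← Real.exp_add]; simp
  rw [he]
  have ef := Real.exp_pos (-ε)
  generalize Real.exp (-ε) = f at *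
  generalize Real.exp ε = e at *
  generalize (Xstarᵀ * L * Xstar).trace = a at *
  generalize (Xtildeᵀ * Ltilde * Xtilde).trace = d at *
  generalize (Xtildeᵀ * L * Xtilde).trace = g at *
  generalize (Xstarᵀ * Ltilde * Xstar).trace = h at *
  have q1 : f ^ 2 * h ≤ f * a := by nlinarith
  nlinarith
end

section
/- Let L and L̃ be real symmetric positive semidefinite n×n matrices with L ≈_ε L̃ for some ε > 0, let B be a real n×d matrix, and let M⋆ be a real n×d matrix with L·M⋆ = B. Let (M^k)_{k≥0} and (D^k)_{k≥0} be sequences of real n×d matrices such that M^0 = 0, L̃·D^k = B − L·M^k for every k, and M^{k+1} = M^k + D^k for every k. Then for every k ≥ 0, ‖M^k − M⋆‖_L ≤ c(ε)^k · ‖M⋆‖_L, where c(ε) := sqrt(1 + e^{2ε} − 2e^{−ε}). -/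
open Matrix

lemma quad_nonneg {n d : ℕ} {A : Matrix (Fin n) (Fin n) ℝ} (hA : A.PosSemidef)
    (X : Matrix (Fin n) (Fin d) ℝ) : 0 ≤ (Xᵀ * A * X).trace := by
  have h := (hA.conjTranspose_mul_mul_same X).trace_nonneg
  rwa [conjTranspose_eq_transpose_of_trivial] at h

lemma quad_symm {n d : ℕ} {A : Matrix (Fin n) (Fin n) ℝ} (hA : A.PosSemidef)
    (X Y : Matrix (Fin n) (Fin d) ℝ) : (Xᵀ * A * Y).trace = (Yᵀ * A * X).trace := by
  have h : Aᵀ = A := by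
    have := hA.isHermitian.eq
    rwa [conjTranspose_eq_transpose_of_trivial] at this
  rw [← trace_transpose]
  simp [transpose_mul, h, Matrix.mul_assoc]

lemma quad_expand {n d : ℕ} {A : Matrix (Fin n) (Fin n) ℝ} (hA : A.PosSemidef)
    (X Y : Matrix (Fin n) (Fin d) ℝ) (a : ℝ) :
    ((X + a • Y)ᵀ * A * (X + a • Y)).trace =
      (Xᵀ * A * X).trace + 2 * a * (Xᵀ * A * Y).trace + a ^ 2 * (Yᵀ * A * Y).trace := by
  have h := quad_symm hA X Y
  simp only [transpose_add, transpose_smul, Matrix.add_mul, Matrix.mul_add, Matrix.smul_mul,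
    Matrix.mul_smul, trace_add, trace_smul, smul_eq_mul]
  rw [← h]; ring

lemma step_bound {n d : ℕ} (ε : ℝ) (L T : Matrix (Fin n) (Fin n) ℝ)
    (hL : L.PosSemidef) (hT : T.PosSemidef) (hA : SpecApprox ε L T)
    (E D : Matrix (Fin n) (Fin d) ℝ) (hD : T * D = -(L * E)) :
    ((E + D)ᵀ * L * (E + D)).trace ≤
      (1 + Real.exp (2 * ε) - 2 * Real.exp (-ε)) * (Eᵀ * L * E).trace := by
  obtain ⟨h1, h2⟩ := hA
  have a1 := quad_nonneg h1 E
  have a2 := quad_nonneg h2 D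
  simp only [Matrix.mul_sub, Matrix.sub_mul, Matrix.smul_mul, Matrix.mul_smul, trace_sub,
    trace_smul, smul_eq_mul] at a1 a2
  have b1 : (Eᵀ * L * D).trace = -(Dᵀ * T * D).trace := by
    rw [quad_symm hL, Matrix.mul_assoc, Matrix.mul_assoc Dᵀ T, hD]
    simp
  have b2 : (Eᵀ * T * D).trace = -(Eᵀ * L * E).trace := by
    rw [Matrix.mul_assoc, hD, Matrix.mul_assoc]
    simp
  have c1 := quad_nonneg hL (E + Real.exp (-ε) • D)
  have c2 := quad_nonneg hT (E + Real.exp ε • D)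
  have c3 := quad_expand hL E D 1
  rw [quad_expand hL, b1] at c1
  rw [quad_expand hT, b2] at c2
  rw [one_smul, b1] at c3
  rw [c3]
  have hx : 0 < Real.exp ε := Real.exp_pos _
  have hy : 0 < Real.exp (-ε) := Real.exp_pos _
  have hxy : Real.exp ε * Real.exp (-ε) = 1 := by rw [← Real.exp_add]; simp
  have hx2 : Real.exp (2 * ε) = Real.exp ε ^ 2 := by rw [two_mul, Real.exp_add, sq]
  rw [hx2]
  generalize Real.exp ε = x at *
  generalize Real.exp (-ε) = y at *
  generalize (Eᵀ * L * E).trace = e at *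
  generalize (Dᵀ * T * D).trace = t at *
  generalize (Dᵀ * L * D).trace = r at *
  generalize (Eᵀ * T * E).trace = s at *
  -- upper bound on t
  have u : t ≤ x * e := by
    have k1 : y ^ 2 * r ≤ y ^ 2 * (x * t) := by gcongr; linarith
    have k2 : y ^ 2 * (x * t) = y * t := by linear_combination y * t * hxy
    have k3 : 0 ≤ x * (e - y * t) := mul_nonneg hx.le (by linarith)
    have k4 : x * (e - y * t) = x * e - t := by linear_combination -t * hxy
    linarith
  have l : y * e ≤ t := by
    have k1 : 0 ≤ x * (e - y * s) := mul_nonneg hx.le (by linarith)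
    have k2 : x * (e - y * s) = x * e - s := by linear_combination -s * hxy
    have k3 : 0 ≤ y ^ 2 * (x ^ 2 * t - x * e) := mul_nonneg (by positivity) (by linarith)
    have k4 : y ^ 2 * (x ^ 2 * t - x * e) = t - y * e := by
      linear_combination (t * (x * y + 1) - y * e) * hxy
    linarith
  have v : x * t ≤ x * (x * e) := by gcongr
  linarith

/-- Iterative refinement with an `ε`-approximate matrix `L̃` converges
linearly: `‖M^k − M⋆‖_L ≤ c(ε)^k ‖M⋆‖_L`. -/
theorem stmt2 {n d : ℕ} (ε : ℝ) (hε : 0 < ε)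
    (L Ltilde : Matrix (Fin n) (Fin n) ℝ)
    (hL : L.PosSemidef) (hLt : Ltilde.PosSemidef)
    (hApprox : SpecApprox ε L Ltilde)
    (B Mstar : Matrix (Fin n) (Fin d) ℝ) (hMstar : L * Mstar = B)
    (M D : ℕ → Matrix (Fin n) (Fin d) ℝ)
    (hM0 : M 0 = 0)
    (hD : ∀ k : ℕ, Ltilde * D k = B - L * M k)
    (hMsucc : ∀ k : ℕ, M (k + 1) = M k + D k) :
    ∀ k : ℕ, Lnorm L (M k - Mstar) ≤ cEps ε ^ k * Lnorm L Mstar := by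
  have hc : 0 ≤ 1 + Real.exp (2 * ε) - 2 * Real.exp (-ε) := by
    have i1 : 1 ≤ Real.exp (2 * ε) := Real.one_le_exp (by linarith)
    have i2 : Real.exp (-ε) ≤ 1 := Real.exp_le_one_iff.mpr (by linarith)
    linarith
  intro k
  induction k with
  | zero => simp [hM0, Lnorm]
  | succ k ih =>
    have hE : Ltilde * D k = -(L * (M k - Mstar)) := by
      rw [hD, Matrix.mul_sub, hMstar]; abel
    have hs := step_bound ε L Ltilde hL hLt hApprox (M k - Mstar) (D k) hE
    have he : M (k + 1) - Mstar = M k - Mstar + D k := by rw [hMsucc]; abel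
    have hstep : Lnorm L (M (k + 1) - Mstar) ≤ cEps ε * Lnorm L (M k - Mstar) := by
      rw [he]
      unfold Lnorm cEps
      rw [← Real.sqrt_mul hc]
      exact Real.sqrt_le_sqrt hs
    calc _ ≤ cEps ε * Lnorm L (M k - Mstar) := hstep
      _ ≤ cEps ε * (cEps ε ^ k * Lnorm L Mstar) :=
        mul_le_mul_of_nonneg_left ih (Real.sqrt_nonneg _)
      _ = _ := by ring
end

section
/- Let H and M be real symmetric positive definite n×n matrices, let μ, L′ > 0 satisfy μ·‖v‖² ≤ vᵀ·H·v ≤ L′·‖v‖² for all v ∈ ℝⁿ (Euclidean norm), and let ε > 0 satisfy M ≈_ε H. Then for every v ∈ ℝⁿ, ‖v − M⁻¹·H·v‖ ≤ sqrt(L′/μ) · c(ε) · ‖v‖, where c(ε) := sqrt(1 + e^{2ε} − 2e^{−ε}) and ‖·‖ is the Euclidean norm. -/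
open Matrix

/-- Euclidean-norm bound on the approximate Newton error map:
`‖v − M⁻¹ H v‖ ≤ sqrt(L'/μ) c(ε) ‖v‖`. -/
theorem stmt4 {n : ℕ} (H M : Matrix (Fin n) (Fin n) ℝ)
    (hH : H.PosDef) (hM : M.PosDef)
    (μ L' : ℝ) (hμ : 0 < μ) (hL' : 0 < L')
    (hbound : ∀ v : Fin n → ℝ,
      μ * (v ⬝ᵥ v) ≤ v ⬝ᵥ (H *ᵥ v) ∧ v ⬝ᵥ (H *ᵥ v) ≤ L' * (v ⬝ᵥ v))
    (ε : ℝ) (hε : 0 < ε) (hApprox : SpecApprox ε M H) :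
    ∀ v : Fin n → ℝ,
      Real.sqrt ((v - M⁻¹ *ᵥ (H *ᵥ v)) ⬝ᵥ (v - M⁻¹ *ᵥ (H *ᵥ v))) ≤
        Real.sqrt (L' / μ) * cEps ε * Real.sqrt (v ⬝ᵥ v) := by
  intro v
  obtain ⟨h1, h2⟩ := hApprox
  set u := M⁻¹ *ᵥ (H *ᵥ v) with hu
  have hdet : IsUnit M.det := (Matrix.isUnit_iff_isUnit_det M).1 hM.isUnit
  have hMu : M *ᵥ u = H *ᵥ v := by
    rw [hu, Matrix.mulVec_mulVec, Matrix.mul_nonsing_inv M hdet, Matrix.one_mulVec]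
  have hEF : Real.exp ε * Real.exp (-ε) = 1 := by rw [← Real.exp_add]; simp
  have hE2 : Real.exp (2 * ε) = Real.exp ε * Real.exp ε := by
    rw [← Real.exp_add]; congr 1; ring
  have hF1 : Real.exp (-ε) ≤ 1 := Real.exp_le_one_iff.2 (by linarith)
  have hE1 : 1 ≤ Real.exp ε := Real.one_le_exp hε.le
  have hcE : cEps ε = Real.sqrt (1 + Real.exp (2 * ε) - 2 * Real.exp (-ε)) := rfl
  have hFpos : 0 < Real.exp (-ε) := Real.exp_pos _
  rw [hE2] at hcE
  generalize Real.exp ε = E at *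
  generalize Real.exp (-ε) = F at *
  have symm : ∀ (A : Matrix (Fin n) (Fin n) ℝ), A.IsHermitian →
      ∀ x y : Fin n → ℝ, x ⬝ᵥ (A *ᵥ y) = y ⬝ᵥ (A *ᵥ x) := by
    intro A hA x y
    have hT : Aᵀ = A := by simpa [Matrix.IsHermitian, Matrix.conjTranspose_eq_transpose_of_trivial] using hA
    rw [Matrix.dotProduct_mulVec, ← Matrix.mulVec_transpose, hT, dotProduct_comm]
  have sH := symm H hH.isHermitian u v
  have sM := symm M hM.isHermitian u v
  have nn : ∀ (A : Matrix (Fin n) (Fin n) ℝ), A.PosSemidef →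
      ∀ x : Fin n → ℝ, 0 ≤ x ⬝ᵥ (A *ᵥ x) := by
    intro A hA x
    simpa using hA.dotProduct_mulVec_nonneg x
  have k1 := nn M hM.posSemidef (u - F • v)
  have k2 := nn _ h2 v
  have k3 := nn _ h1 u
  have k4 := nn H hH.posSemidef (u - E • v)
  have k5 := (hbound (v - u)).1
  have k6 := (hbound v).2
  have k7 := nn H hH.posSemidef v
  simp only [Matrix.mulVec_sub, Matrix.sub_mulVec, Matrix.mulVec_smul, Matrix.smul_mulVec,
    dotProduct_sub, sub_dotProduct, dotProduct_smul, smul_dotProduct, smul_eq_mul, hMu] at k1 k2 k3 k4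
  have k8 : (v - u) ⬝ᵥ (H *ᵥ (v - u)) =
      v ⬝ᵥ (H *ᵥ v) - 2 * (v ⬝ᵥ (H *ᵥ u)) + u ⬝ᵥ (H *ᵥ u) := by
    simp only [Matrix.mulVec_sub, dotProduct_sub, sub_dotProduct]
    linarith
  rw [k8] at k5
  rw [hMu] at sM
  rw [sH] at k1 k3 k4
  rw [sM] at k1
  generalize v ⬝ᵥ (H *ᵥ v) = a at *
  generalize v ⬝ᵥ (H *ᵥ u) = q at *
  generalize u ⬝ᵥ (H *ᵥ u) = p at *
  generalize v ⬝ᵥ (M *ᵥ v) = m at *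
  have l1 : F * a ≤ q := by
    have : F * F * m ≤ F * F * (E * a) := mul_le_mul_of_nonneg_left (by linarith) (by positivity)
    have e : F * F * (E * a) = F * a := by linear_combination F * a * hEF
    nlinarith
  have l2a : p ≤ E * q := by
    have h : 0 ≤ E * (q - F * p) := mul_nonneg (by linarith) k3
    have e : E * (q - F * p) = E * q - p := by linear_combination -p * hEF
    linarith
  have l2 : p ≤ E * E * a := by nlinarith
  have hc : 0 ≤ 1 + E * E - 2 * F := by nlinarith
  have hs : 0 ≤ v ⬝ᵥ v := Finset.sum_nonneg fun i _ => mul_self_nonneg (v i)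
  rw [hcE, ← Real.sqrt_mul (by positivity), ← Real.sqrt_mul (by positivity)]
  apply Real.sqrt_le_sqrt
  have l3 : (1 + E * E - 2 * F) * a ≤ (1 + E * E - 2 * F) * (L' * (v ⬝ᵥ v)) :=
    mul_le_mul_of_nonneg_left k6 hc
  have l4 : μ * ((v - u) ⬝ᵥ (v - u)) ≤ (1 + E * E - 2 * F) * (L' * (v ⬝ᵥ v)) := by linarith
  have l5 : L' / μ * (1 + E * E - 2 * F) * (v ⬝ᵥ v) =
      (1 + E * E - 2 * F) * (L' * (v ⬝ᵥ v)) / μ := by ring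
  rw [l5, le_div_iff₀ hμ]
  linarith
end

section
/- Let L and L̃ be real symmetric positive definite n×n matrices with L ≈_ε L̃ for some ε > 0, let b ∈ ℝⁿ, and let x⋆ := L⁻¹·b and x̃ := L̃⁻¹·b. Then (x⋆)ᵀ·L·x̃ ≥ e^{−ε} · (x⋆)ᵀ·L·x⋆. -/
open Matrix

/-- For `x⋆ = L⁻¹ b`, `x̃ = L̃⁻¹ b` with `L ≈_ε L̃` positive definite,
`(x⋆)ᵀ L x̃ ≥ e^{−ε} (x⋆)ᵀ L x⋆`. -/
theorem stmt15 {n : ℕ} (ε : ℝ) (hε : 0 < ε)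
    (L Ltilde : Matrix (Fin n) (Fin n) ℝ)
    (hL : L.PosDef) (hLt : Ltilde.PosDef)
    (hApprox : SpecApprox ε L Ltilde)
    (b xstar xtilde : Fin n → ℝ)
    (hxstar : xstar = L⁻¹ *ᵥ b) (hxtilde : xtilde = Ltilde⁻¹ *ᵥ b) :
    Real.exp (-ε) * (xstar ⬝ᵥ (L *ᵥ xstar)) ≤ xstar ⬝ᵥ (L *ᵥ xtilde) := by
  have hLx : L *ᵥ xstar = b := by
    rw [hxstar, mulVec_mulVec, Matrix.mul_nonsing_inv _ hL.det_pos.ne'.isUnit, one_mulVec]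
  have hMy : Ltilde *ᵥ xtilde = b := by
    rw [hxtilde, mulVec_mulVec, Matrix.mul_nonsing_inv _ hLt.det_pos.ne'.isUnit, one_mulVec]
  have hLT : Lᵀ = L := by simpa [Matrix.IsHermitian, conjTranspose_eq_transpose_of_trivial] using hL.isHermitian
  have hMT : Ltildeᵀ = Ltilde := by
    simpa [Matrix.IsHermitian, conjTranspose_eq_transpose_of_trivial] using hLt.isHermitian
  have e1 : xstar ⬝ᵥ (L *ᵥ xtilde) = xtilde ⬝ᵥ b := by
    rw [dotProduct_mulVec, ← mulVec_transpose, hLT, hLx, dotProduct_comm]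
  have e2 : xtilde ⬝ᵥ (Ltilde *ᵥ xstar) = xstar ⬝ᵥ b := by
    rw [dotProduct_mulVec, ← mulVec_transpose, hMT, hMy, dotProduct_comm]
  rw [e1, hLx]
  have hc := Real.exp_pos (-ε)
  have h1 := hLt.posSemidef.dotProduct_mulVec_nonneg (xtilde - Real.exp (-ε) • xstar)
  have h2 := hApprox.1.dotProduct_mulVec_nonneg xstar
  generalize Real.exp (-ε) = c at *
  simp only [star_trivial, mulVec_sub, sub_mulVec, mulVec_smul, smul_mulVec, dotProduct_sub,
    sub_dotProduct, dotProduct_smul, smul_dotProduct, smul_eq_mul, hMy, hLx, e2] at h1 h2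
  nlinarith [mul_nonneg hc.le h2]
end

section
/- Let L and L̃ be real symmetric positive definite n×n matrices with L ≈_ε L̃ for some ε > 0, let b ∈ ℝⁿ, and let x⋆ := L⁻¹·b and x̃ := L̃⁻¹·b. Then x̃ᵀ·L·x̃ ≤ e^{2ε} · (x⋆)ᵀ·L·x⋆. -/
open Matrix

/-- For `x⋆ = L⁻¹ b`, `x̃ = L̃⁻¹ b` with `L ≈_ε L̃` positive definite,
`x̃ᵀ L x̃ ≤ e^{2ε} (x⋆)ᵀ L x⋆`. -/
theorem stmt16 {n : ℕ} (ε : ℝ) (hε : 0 < ε)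
    (L Ltilde : Matrix (Fin n) (Fin n) ℝ)
    (hL : L.PosDef) (hLt : Ltilde.PosDef)
    (hApprox : SpecApprox ε L Ltilde)
    (b xstar xtilde : Fin n → ℝ)
    (hxstar : xstar = L⁻¹ *ᵥ b) (hxtilde : xtilde = Ltilde⁻¹ *ᵥ b) :
    xtilde ⬝ᵥ (L *ᵥ xtilde) ≤ Real.exp (2 * ε) * (xstar ⬝ᵥ (L *ᵥ xstar)) := by
  have hLx : L *ᵥ xstar = b := by
    rw [hxstar, mulVec_mulVec, mul_nonsing_inv _ ((isUnit_iff_isUnit_det _).1 hL.isUnit),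
      one_mulVec]
  have hLy : Ltilde *ᵥ xtilde = b := by
    rw [hxtilde, mulVec_mulVec, mul_nonsing_inv _ ((isUnit_iff_isUnit_det _).1 hLt.isUnit),
      one_mulVec]
  have h1 := hApprox.2.dotProduct_mulVec_nonneg xtilde
  have h2 := hL.posSemidef.dotProduct_mulVec_nonneg (xtilde - Real.exp ε • xstar)
  have hs : xstar ⬝ᵥ (L *ᵥ xtilde) = xtilde ⬝ᵥ b := by
    have hT : Lᵀ = L := by simpa using hL.isHermitian.eq
    rw [dotProduct_mulVec, ← mulVec_transpose, hT, hLx, dotProduct_comm]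
  have hE : Real.exp (2 * ε) = Real.exp ε * Real.exp ε := by
    rw [← Real.exp_add]; ring_nf
  simp only [star_trivial, sub_mulVec, smul_mulVec, mulVec_sub, mulVec_smul, dotProduct_sub,
    sub_dotProduct, dotProduct_smul, smul_dotProduct, smul_eq_mul, hLx, hLy, hs] at h1 h2
  rw [hE, hLx]
  linarith
end

section
/- Let L and L̃ be real symmetric positive semidefinite n×n matrices with L ≈_ε L̃ for some ε > 0, let B be a real n×d matrix, let M⋆ be a real n×d matrix with L·M⋆ = B, let M be a real n×d matrix, and let D be a real n×d matrix with L̃·D = B − L·M. Then ‖(M + D) − M⋆‖_L ≤ c(ε)·‖M − M⋆‖_L, where c(ε) := sqrt(1 + e^{2ε} − 2e^{−ε}); i.e., one step of iterative refinement with the approximate matrix L̃ contracts the L-norm error by the factor c(ε). -/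
open Matrix

theorem trace_form_nonneg {n d : ℕ} {S : Matrix (Fin n) (Fin n) ℝ} (hS : S.PosSemidef)
    (X : Matrix (Fin n) (Fin d) ℝ) : 0 ≤ (Xᵀ * S * X).trace := by
  have h := (hS.conjTranspose_mul_mul_same X).trace_nonneg
  rwa [conjTranspose_eq_transpose_of_trivial] at h

theorem trace_form_symm {n d : ℕ} {S : Matrix (Fin n) (Fin n) ℝ} (hS : S.PosSemidef)
    (X Y : Matrix (Fin n) (Fin d) ℝ) : (Xᵀ * S * Y).trace = (Yᵀ * S * X).trace := by
  have h : Sᵀ = S := by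
    have := hS.isHermitian.eq
    rwa [conjTranspose_eq_transpose_of_trivial] at this
  rw [← trace_transpose, transpose_mul, transpose_mul, transpose_transpose, h, Matrix.mul_assoc]

theorem trace_form_expand {n d : ℕ} {S : Matrix (Fin n) (Fin n) ℝ} (hS : S.PosSemidef)
    (X Y : Matrix (Fin n) (Fin d) ℝ) (s : ℝ) :
    ((X + s • Y)ᵀ * S * (X + s • Y)).trace
      = (Xᵀ * S * X).trace + 2 * s * (Xᵀ * S * Y).trace + s ^ 2 * (Yᵀ * S * Y).trace := by
  have h := trace_form_symm hS X Y
  simp only [transpose_add, transpose_smul, Matrix.add_mul, Matrix.mul_add, Matrix.smul_mul,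
    Matrix.mul_smul, trace_add, trace_smul, smul_eq_mul]
  rw [← h]
  ring

/-- One step of iterative refinement with the approximate matrix `L̃`
contracts the `L`-norm error by the factor `c(ε)`. -/
theorem stmt17 {n d : ℕ} (ε : ℝ) (hε : 0 < ε)
    (L Ltilde : Matrix (Fin n) (Fin n) ℝ)
    (hL : L.PosSemidef) (hLt : Ltilde.PosSemidef)
    (hApprox : SpecApprox ε L Ltilde)
    (B Mstar M D : Matrix (Fin n) (Fin d) ℝ)
    (hMstar : L * Mstar = B)
    (hD : Ltilde * D = B - L * M) :
    Lnorm L ((M + D) - Mstar) ≤ cEps ε * Lnorm L (M - Mstar) := by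
  obtain ⟨h1, h2⟩ := hApprox
  obtain ⟨E, hE⟩ : ∃ E, E = M - Mstar := ⟨_, rfl⟩
  have hTD : Ltilde * D = -(L * E) := by
    rw [hD, hE, ← hMstar, Matrix.mul_sub]; abel
  have hsum : M + D - Mstar = E + (1 : ℝ) • D := by rw [hE, one_smul]; abel
  have e1 : (Dᵀ * L * E).trace = -(Dᵀ * Ltilde * D).trace := by
    rw [Matrix.mul_assoc Dᵀ Ltilde, hTD, Matrix.mul_neg, trace_neg, neg_neg, Matrix.mul_assoc]
  have e2 : (Eᵀ * Ltilde * D).trace = -(Eᵀ * L * E).trace := by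
    rw [Matrix.mul_assoc, hTD, Matrix.mul_neg, trace_neg, Matrix.mul_assoc]
  rw [← trace_form_symm hL] at e1
  have ha := trace_form_nonneg hL E
  have k1 := trace_form_nonneg h1 E
  have k2 := trace_form_nonneg h2 D
  have k3 := trace_form_nonneg hLt (E + Real.exp ε • D)
  have k4 := trace_form_nonneg hL (E + Real.exp (-ε) • D)
  rw [trace_form_expand hLt, e2] at k3
  rw [trace_form_expand hL, e1] at k4
  simp only [Matrix.mul_sub, Matrix.sub_mul, Matrix.mul_smul, Matrix.smul_mul, trace_sub,
    trace_smul, smul_eq_mul] at k1 k2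
  unfold Lnorm cEps
  rw [← hE, ← Real.sqrt_mul' _ ha, hsum, trace_form_expand hL, e1]
  apply Real.sqrt_le_sqrt
  generalize (Eᵀ * L * E).trace = a at *
  generalize (Dᵀ * Ltilde * D).trace = t at *
  generalize (Dᵀ * L * D).trace = b at *
  generalize (Eᵀ * Ltilde * E).trace = q at *
  have hx : 0 < Real.exp ε := Real.exp_pos ε
  have hy : 0 < Real.exp (-ε) := Real.exp_pos _
  have hxy : Real.exp ε * Real.exp (-ε) = 1 := by rw [← Real.exp_add]; simp
  have h2x : Real.exp (2 * ε) = Real.exp ε ^ 2 := by rw [← Real.exp_nat_mul]; norm_num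
  rw [h2x]
  generalize Real.exp ε = x at *
  generalize Real.exp (-ε) = y at *
  have q1 : q ≤ x * a := by
    have := mul_nonneg hx.le k1
    linear_combination this - q * hxy
  have t1 : y * a ≤ t := by
    have : 0 ≤ y ^ 2 * (x ^ 2 * t - x * a) := mul_nonneg (by positivity) (by linarith)
    have e : y ^ 2 * (x ^ 2 * t - x * a) = t - y * a := by
      linear_combination ((x * y + 1) * t - y * a) * hxy
    linarith
  have t2 : t ≤ x * a := by
    have h5 : y ^ 2 * b ≤ y * t := by
      have := mul_nonneg (sq_nonneg y) k2
      linear_combination this + y * t * hxy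
    have : 0 ≤ x * (a - y * t) := mul_nonneg hx.le (by linarith)
    linear_combination this - t * hxy
  have t3 : x * t ≤ x ^ 2 * a := by
    have := mul_le_mul_of_nonneg_left t2 hx.le
    linarith
  linarith
end
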